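/- In the tied braid monoid TB_n^B of type B, one has φ_j σ_i = σ_i φ_{s_i(j)} for all 1 ≤ i ≤ n−1 and all 1 ≤ j ≤ n, where s_i denotes the transposition (i, i+1) acting on {1, …, n}. -/

import Mathlib

/-! The tied braid monoid of type B, `TBₙᴮ`, presented by generators and relations. -/

/-- Generators of the tied braid monoid of type B on `n` (moving) strands:
`sig i` is `σ_{i+1}`, `sigInv i` is `σ_{i+1}⁻¹`, `rho` is `ρ₁`, `rhoInv` is `ρ₁⁻¹`,
`phi` is `φ₁` and `eta i` is `η_{i+1}` (for `i : Fin (n-1)`). -/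
inductive TBGen (n : ℕ) : Type
  | sig : Fin (n - 1) → TBGen n
  | sigInv : Fin (n - 1) → TBGen n
  | rho : TBGen n
  | rhoInv : TBGen n
  | phi : TBGen n
  | eta : Fin (n - 1) → TBGen n

namespace TiedBraidB

variable (n : ℕ)

/-- The word `σᵢ` (for `1 ≤ i ≤ n-1`; junk value `1` otherwise). -/
def wσ (i : ℕ) : FreeMonoid (TBGen n) :=
  if h : 1 ≤ i ∧ i ≤ n - 1 then FreeMonoid.of (TBGen.sig ⟨i - 1, by omega⟩) else 1

/-- The word `σᵢ⁻¹`. -/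
def wσi (i : ℕ) : FreeMonoid (TBGen n) :=
  if h : 1 ≤ i ∧ i ≤ n - 1 then FreeMonoid.of (TBGen.sigInv ⟨i - 1, by omega⟩) else 1

/-- The word `ηᵢ`. -/
def wη (i : ℕ) : FreeMonoid (TBGen n) :=
  if h : 1 ≤ i ∧ i ≤ n - 1 then FreeMonoid.of (TBGen.eta ⟨i - 1, by omega⟩) else 1

/-- The word `ρ₁`. -/
def wρ : FreeMonoid (TBGen n) := FreeMonoid.of TBGen.rho

/-- The word `ρ₁⁻¹`. -/
def wρi : FreeMonoid (TBGen n) := FreeMonoid.of TBGen.rhoInv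

/-- The word `φ₁`. -/
def wφ : FreeMonoid (TBGen n) := FreeMonoid.of TBGen.phi

/-- The descending word `σₖ σₖ₋₁ ⋯ σ₁`. -/
def wσDesc : ℕ → FreeMonoid (TBGen n)
  | 0 => 1
  | k + 1 => wσ n (k + 1) * wσDesc k

/-- The ascending word `σ₁ σ₂ ⋯ σₖ`. -/
def wσAsc : ℕ → FreeMonoid (TBGen n)
  | 0 => 1
  | k + 1 => wσAsc k * wσ n (k + 1)

/-- The descending word `σₖ⁻¹ σₖ₋₁⁻¹ ⋯ σ₁⁻¹`. -/
def wσiDesc : ℕ → FreeMonoid (TBGen n)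
  | 0 => 1
  | k + 1 => wσi n (k + 1) * wσiDesc k

/-- The ascending word `σ₁⁻¹ σ₂⁻¹ ⋯ σₖ⁻¹`. -/
def wσiAsc : ℕ → FreeMonoid (TBGen n)
  | 0 => 1
  | k + 1 => wσiAsc k * wσi n (k + 1)

/-- The defining relations of the tied braid monoid `TBₙᴮ` of type B. -/
inductive tbRel : FreeMonoid (TBGen n) → FreeMonoid (TBGen n) → Prop
  | sig_inv (i : ℕ) (h1 : 1 ≤ i) (h2 : i ≤ n - 1) :
      tbRel (wσ n i * wσi n i) 1
  | inv_sig (i : ℕ) (h1 : 1 ≤ i) (h2 : i ≤ n - 1) :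
      tbRel (wσi n i * wσ n i) 1
  | rho_inv : tbRel (wρ n * wρi n) 1
  | inv_rho : tbRel (wρi n * wρ n) 1
  | sig_comm (i j : ℕ) (h1 : 1 ≤ i) (h2 : i + 1 < j) (h3 : j ≤ n - 1) :
      tbRel (wσ n i * wσ n j) (wσ n j * wσ n i)
  | sig_braid (i : ℕ) (h1 : 1 ≤ i) (h2 : i + 1 ≤ n - 1) :
      tbRel (wσ n i * wσ n (i + 1) * wσ n i) (wσ n (i + 1) * wσ n i * wσ n (i + 1))
  | rho_sig (i : ℕ) (h1 : 2 ≤ i) (h2 : i ≤ n - 1) :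
      tbRel (wρ n * wσ n i) (wσ n i * wρ n)
  | rho_sig_rho_sig (h : 2 ≤ n) :
      tbRel (wρ n * wσ n 1 * wρ n * wσ n 1) (wσ n 1 * wρ n * wσ n 1 * wρ n)
  | eta_comm (i j : ℕ) (h1 : 1 ≤ i) (h2 : i ≤ n - 1) (h3 : 1 ≤ j) (h4 : j ≤ n - 1) :
      tbRel (wη n i * wη n j) (wη n j * wη n i)
  | eta_sig (i : ℕ) (h1 : 1 ≤ i) (h2 : i ≤ n - 1) :
      tbRel (wη n i * wσ n i) (wσ n i * wη n i)
  | eta_sig_far (i j : ℕ) (h1 : 1 ≤ i) (h2 : i ≤ n - 1) (h3 : 1 ≤ j) (h4 : j ≤ n - 1)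
      (h5 : i + 1 < j ∨ j + 1 < i) :
      tbRel (wη n i * wσ n j) (wσ n j * wη n i)
  | eta_sig_sig (i j : ℕ) (h1 : 1 ≤ i) (h2 : i ≤ n - 1) (h3 : 1 ≤ j) (h4 : j ≤ n - 1)
      (h5 : j = i + 1 ∨ i = j + 1) :
      tbRel (wη n i * wσ n j * wσ n i) (wσ n j * wσ n i * wη n j)
  | eta_sig_sigInv (i j : ℕ) (h1 : 1 ≤ i) (h2 : i ≤ n - 1) (h3 : 1 ≤ j) (h4 : j ≤ n - 1)
      (h5 : j = i + 1 ∨ i = j + 1) :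
      tbRel (wη n i * wσ n j * wσi n i) (wσ n j * wσi n i * wη n j)
  | eta_eta_sig (i j : ℕ) (h1 : 1 ≤ i) (h2 : i ≤ n - 1) (h3 : 1 ≤ j) (h4 : j ≤ n - 1)
      (h5 : j = i + 1 ∨ i = j + 1) :
      tbRel (wη n i * wη n j * wσ n i) (wσ n i * wη n i * wη n j)
  | eta_eta_sig' (i j : ℕ) (h1 : 1 ≤ i) (h2 : i ≤ n - 1) (h3 : 1 ≤ j) (h4 : j ≤ n - 1)
      (h5 : j = i + 1 ∨ i = j + 1) :
      tbRel (wη n i * wη n j * wσ n i) (wη n j * wσ n i * wη n j)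
  | eta_idem (i : ℕ) (h1 : 1 ≤ i) (h2 : i ≤ n - 1) :
      tbRel (wη n i * wη n i) (wη n i)
  | phi_idem : tbRel (wφ n * wφ n) (wφ n)
  | rho_eta (i : ℕ) (h1 : 1 ≤ i) (h2 : i ≤ n - 1) :
      tbRel (wρ n * wη n i) (wη n i * wρ n)
  | rho_phi : tbRel (wρ n * wφ n) (wφ n * wρ n)
  | phi_eta (i : ℕ) (h1 : 1 ≤ i) (h2 : i ≤ n - 1) :
      tbRel (wφ n * wη n i) (wη n i * wφ n)
  | phi_sig (i : ℕ) (h1 : 2 ≤ i) (h2 : i ≤ n - 1) :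
      tbRel (wφ n * wσ n i) (wσ n i * wφ n)
  | phi_move (i : ℕ) (h1 : 2 ≤ i) (h2 : i ≤ n) :
      tbRel (wσDesc n (i - 1) * wφ n * wσiAsc n (i - 1))
        (wσiDesc n (i - 1) * wφ n * wσAsc n (i - 1))
  | phi_eta_one (h : 2 ≤ n) :
      tbRel (wφ n * wη n 1) (wφ n * wσ n 1 * wφ n * wσi n 1)
  | phi_eta_one' (h : 2 ≤ n) :
      tbRel (wφ n * wσ n 1 * wφ n * wσi n 1) (wσ n 1 * wφ n * wσi n 1 * wη n 1)

/-- The tied braid monoid of type B on `n` strands. -/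
def TB : Type := (conGen (tbRel n)).Quotient

instance : Monoid (TB n) := inferInstanceAs (Monoid (conGen (tbRel n)).Quotient)

/-- The canonical projection from the free monoid on the generators onto `TBₙᴮ`. -/
def mk : FreeMonoid (TBGen n) →* TB n := Con.mk' _

/-- The generator `σᵢ` of `TBₙᴮ`. -/
def σB (i : ℕ) : TB n := mk n (wσ n i)

/-- The generator `σᵢ⁻¹` of `TBₙᴮ`. -/
def σiB (i : ℕ) : TB n := mk n (wσi n i)

/-- The generator `ρ₁` of `TBₙᴮ`. -/
def ρB : TB n := mk n (wρ n)

/-- The generator `ρ₁⁻¹` of `TBₙᴮ`. -/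
def ρiB : TB n := mk n (wρi n)

/-- The generator `φ₁` of `TBₙᴮ`. -/
def φB : TB n := mk n (wφ n)

/-- The generator `ηᵢ` of `TBₙᴮ`. -/
def ηB (i : ℕ) : TB n := mk n (wη n i)

/-- The word `σᵢ σᵢ₊₁ ⋯ σₖ` (empty if `k < i`). -/
def wσRange (i k : ℕ) : FreeMonoid (TBGen n) :=
  ((List.range' i (k + 1 - i)).map (wσ n)).prod

/-- The word `σₖ⁻¹ σₖ₋₁⁻¹ ⋯ σᵢ⁻¹` (empty if `k < i`). -/
def wσiRangeRev (i k : ℕ) : FreeMonoid (TBGen n) :=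
  ((List.range' i (k + 1 - i)).reverse.map (wσi n)).prod

/-- The word representing the generalized tie `η_{i,j}`:
`σᵢ ⋯ σ_{j-2} η_{j-1} σ_{j-2}⁻¹ ⋯ σᵢ⁻¹` for `i < j`, with the conventions
`η_{i,i} = 1` and `η_{j,i} = η_{i,j}`. -/
def wηg (i j : ℕ) : FreeMonoid (TBGen n) :=
  if i = j then 1
  else wσRange n (min i j) (max i j - 2) * wη n (max i j - 1) *
    wσiRangeRev n (min i j) (max i j - 2)

/-- The word representing the generalized tie `φⱼ = σ_{j-1} ⋯ σ₁ φ₁ σ₁⁻¹ ⋯ σ_{j-1}⁻¹`. -/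
def wφg (j : ℕ) : FreeMonoid (TBGen n) :=
  wσDesc n (j - 1) * wφ n * wσiAsc n (j - 1)

/-- The generalized tie `η_{i,j}` joining the `i`-th and `j`-th moving strands. -/
def ηg (i j : ℕ) : TB n := mk n (wηg n i j)

/-- The generalized tie `φⱼ` joining the fixed strand and the `j`-th moving strand. -/
def φg (j : ℕ) : TB n := mk n (wφg n j)

end TiedBraidB

/-!
The products `σ_{j-1} ⋯ σ₁ φ₁ σ₁⁻¹ ⋯ σ_{j-1}⁻¹` and `σ_{j-1}⁻¹ ⋯ σ₁⁻¹ φ₁ σ₁ ⋯ σ_{j-1}` both equal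
`φⱼ`, so conjugation by `σⱼ` takes `φⱼ` to `φⱼ₊₁` and back, which settles `i = j` and `j = i + 1`.
Commutation is preserved by conjugation: for `j < i` this reduces `σᵢ φⱼ = φⱼ σᵢ` to `j = 1`, and
for `j > i + 1` it reduces it to `j = i + 2`. There the braid relation says that conjugation by
`σᵢ₊₁ σᵢ` takes `σᵢ₊₁` to `σᵢ`; as it also takes `φᵢ` to `φᵢ₊₂`, commutation of `σᵢ` with `φᵢ₊₂`
follows from that of `σᵢ₊₁` with `φᵢ`.
-/

namespace TiedBraidB

section Semigroup

variable {S : Type*} [Semigroup S]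

theorem commute_of_semiconjBy {u a b a' b' : S} (hu : IsRightRegular u)
    (ha : SemiconjBy u a a') (hb : SemiconjBy u b b') (hab : Commute a b) : Commute a' b' :=
  hu <|
    calc a' * b' * u = u * (a * b) := (ha.mul_right hb).eq.symm
      _ = u * (b * a) := by rw [hab.eq]
      _ = b' * a' * u := (hb.mul_right ha).eq

theorem commute_of_braid {s t p q r : S} (hs : IsRightRegular s) (ht : IsRightRegular t)
    (hbraid : s * t * s = t * s * t) (hpq : SemiconjBy s p q) (hqr : SemiconjBy t q r)
    (htp : Commute t p) : Commute s r := by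
  have hts : SemiconjBy (t * s) t s := by rw [SemiconjBy, ← hbraid, mul_assoc]
  exact commute_of_semiconjBy (ht.mul hs) hts (hqr.mul_left hpq) htp

end Semigroup

variable {n i j k : ℕ}

theorem mk_eq_mk_of_tbRel {a b : FreeMonoid (TBGen n)} (h : tbRel n a b) : mk n a = mk n b :=
  (Con.eq _).2 (ConGen.Rel.of _ _ h)

-- Outside the range `1 ≤ i ≤ n - 1`, both `σB n i` and `σiB n i` are `1`.
theorem σB_mul_σiB (n i : ℕ) : σB n i * σiB n i = 1 := by
  by_cases h : 1 ≤ i ∧ i ≤ n - 1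
  · simpa only [σB, σiB, map_mul, map_one] using mk_eq_mk_of_tbRel (tbRel.sig_inv i h.1 h.2)
  · simp [σB, σiB, wσ, wσi, h]

theorem σiB_mul_σB (n i : ℕ) : σiB n i * σB n i = 1 := by
  by_cases h : 1 ≤ i ∧ i ≤ n - 1
  · simpa only [σB, σiB, map_mul, map_one] using mk_eq_mk_of_tbRel (tbRel.inv_sig i h.1 h.2)
  · simp [σB, σiB, wσ, wσi, h]

theorem isRightRegular_σB (n i : ℕ) : IsRightRegular (σB n i) :=
  isRightRegular_of_mul_eq_one (σB_mul_σiB n i)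

theorem commute_σB_σB (hi : 1 ≤ i) (hij : i + 1 < j) (hj : j < n) :
    Commute (σB n i) (σB n j) := by
  simpa only [commute_iff_eq, σB, map_mul] using
    mk_eq_mk_of_tbRel (tbRel.sig_comm i j hi hij (by omega))

theorem σB_braid (hi : 1 ≤ i) (hin : i + 1 < n) :
    σB n i * σB n (i + 1) * σB n i = σB n (i + 1) * σB n i * σB n (i + 1) := by
  simpa only [σB, map_mul] using mk_eq_mk_of_tbRel (tbRel.sig_braid i hi (by omega))

theorem φg_one (n : ℕ) : φg n 1 = φB n := by
  simp [φg, wφg, wσDesc, wσiAsc, φB]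

theorem commute_σB_φB (hi : 1 < i) (hin : i < n) : Commute (σB n i) (φB n) := by
  simpa only [commute_iff_eq, σB, φB, map_mul] using
    (mk_eq_mk_of_tbRel (tbRel.phi_sig i hi (by omega))).symm

theorem φg_succ_eq_σB_mul (hk : 1 ≤ k) : φg n (k + 1) = σB n k * φg n k * σiB n k := by
  obtain ⟨k, rfl⟩ := Nat.exists_eq_add_of_le' hk
  simp [φg, wφg, wσDesc, wσiAsc, σB, σiB, mul_assoc]

theorem φg_eq_mk_wσiDesc_mul (hj : 1 ≤ j) (hjn : j ≤ n) :
    φg n j = mk n (wσiDesc n (j - 1) * wφ n * wσAsc n (j - 1)) := by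
  obtain rfl | hj : 1 = j ∨ 2 ≤ j := by omega
  · simp [φg_one, φB, wσiDesc, wσAsc]
  · exact mk_eq_mk_of_tbRel (tbRel.phi_move j hj hjn)

theorem φg_succ_eq_σiB_mul (hk : 1 ≤ k) (hkn : k < n) :
    φg n (k + 1) = σiB n k * φg n k * σB n k := by
  rw [φg_eq_mk_wσiDesc_mul hk hkn.le, φg_eq_mk_wσiDesc_mul (by omega) hkn]
  obtain ⟨k, rfl⟩ := Nat.exists_eq_add_of_le' hk
  simp [wσiDesc, wσAsc, σB, σiB, mul_assoc]

theorem semiconjBy_σB_φg_φg_succ (hk : 1 ≤ k) : SemiconjBy (σB n k) (φg n k) (φg n (k + 1)) := by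
  rw [SemiconjBy, φg_succ_eq_σB_mul hk, mul_assoc _ (σiB n k), σiB_mul_σB, mul_one]

theorem semiconjBy_σB_φg_succ_φg (hk : 1 ≤ k) (hkn : k < n) :
    SemiconjBy (σB n k) (φg n (k + 1)) (φg n k) := by
  rw [SemiconjBy, φg_succ_eq_σiB_mul hk hkn, ← mul_assoc, ← mul_assoc, σB_mul_σiB, one_mul]

theorem commute_σB_φg_of_lt (hj : 1 ≤ j) (hji : j < i) (hin : i < n) :
    Commute (σB n i) (φg n j) := by
  induction j, hj using Nat.le_induction with
  | base => exact φg_one n ▸ commute_σB_φB hji hin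
  | succ k hk ih =>
    exact commute_of_semiconjBy (isRightRegular_σB n k) (commute_σB_σB hk hji hin)
      (semiconjBy_σB_φg_φg_succ hk) (ih (by omega))

theorem commute_σB_φg_of_succ_lt (hi : 1 ≤ i) (hij : i + 1 < j) (hjn : j ≤ n) :
    Commute (σB n i) (φg n j) := by
  induction j, hij using Nat.le_induction with
  | base =>
    exact commute_of_braid (isRightRegular_σB n i) (isRightRegular_σB n (i + 1))
      (σB_braid hi hjn) (semiconjBy_σB_φg_φg_succ hi) (semiconjBy_σB_φg_φg_succ (by omega))
      (commute_σB_φg_of_lt hi (by omega) hjn)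
  | succ k hik ih =>
    exact commute_of_semiconjBy (isRightRegular_σB n k) (commute_σB_σB hi hik hjn).symm
      (semiconjBy_σB_φg_φg_succ (by omega)) (ih (by omega))

end TiedBraidB

open TiedBraidB in
/-- In `TBₙᴮ`, one has `φⱼ σᵢ = σᵢ φ_{sᵢ(j)}` for all `1 ≤ i ≤ n-1`
and all `1 ≤ j ≤ n`, where `sᵢ` is the transposition `(i, i+1)` acting on `{1, …, n}`. -/
theorem phi_mul_sigma (n i j : ℕ) (hi1 : 1 ≤ i) (hi2 : i ≤ n - 1)
    (hj1 : 1 ≤ j) (hj2 : j ≤ n) :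
    φg n j * σB n i = σB n i * φg n (if j = i then i + 1 else if j = i + 1 then i else j) := by
  suffices h : SemiconjBy (σB n i)
      (φg n (if j = i then i + 1 else if j = i + 1 then i else j)) (φg n j) from h.eq.symm
  have hin : i < n := by omega
  split_ifs with hji_eq hji_succ
  · subst hji_eq
    exact semiconjBy_σB_φg_succ_φg hi1 hin
  · subst hji_succ
    exact semiconjBy_σB_φg_φg_succ hi1
  · obtain hlt | hlt : j < i ∨ i + 1 < j := by omega
    · exact commute_σB_φg_of_lt hj1 hlt hin
    · exact commute_σB_φg_of_succ_lt hi1 hlt hj2
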